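/- (a) If X is a submodule of Y, then E_S(X) ⊆ E_S(Y). (b) If X is a submodule of Y, then the image of E_S(Y) under the canonical quotient map Y → Y/X is equal to E_S(Y/X); equivalently, E_S(Y/X) is isomorphic to E_S(Y)/(X ∩ E_S(Y)). -/

import Mathlib

/-- `E_S(M)` is the intersection of the kernels of all `A`-module homomorphisms `M → S`;
thus `M / E_S(M)` is the `S`-isotypic part of the head of `M` (the functor `ℰ_i` of the
paper, for `S = S_i`). -/
def ES (A : Type*) [Ring A] (S M : Type*) [AddCommGroup S] [Module A S]
    [AddCommGroup M] [Module A M] : Submodule A M :=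
  ⨅ f : M →ₗ[A] S, LinearMap.ker f

/-- for a finite-dimensional algebra `A` over a field `k`, a simple
`A`-module `S`, and a submodule `X` of a finite-dimensional `A`-module `Y`:
(a) `E_S(X) ⊆ E_S(Y)`;
(b) the image of `E_S(Y)` under the canonical quotient map `Y → Y/X` equals `E_S(Y/X)`. -/
theorem stmt11 (k A : Type*) [Field k] [Ring A] [Algebra k A] [FiniteDimensional k A]
    (S : Type*) [AddCommGroup S] [Module A S] [IsSimpleModule A S]
    [Module k S] [IsScalarTower k A S]
    (Y : Type*) [AddCommGroup Y] [Module A Y] [Module k Y] [IsScalarTower k A Y]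
    [FiniteDimensional k Y]
    (X : Submodule A Y) :
    Submodule.map X.subtype (ES A S ↥X) ≤ ES A S Y ∧
    Submodule.map X.mkQ (ES A S Y) = ES A S (Y ⧸ X) := by
  constructor
  · rintro _ ⟨x, hx, rfl⟩
    simp only [ES, SetLike.mem_coe, Submodule.mem_iInf, LinearMap.mem_ker] at hx ⊢
    intro f
    exact hx (f ∘ₗ X.subtype)
  · apply le_antisymm
    · rintro _ ⟨y, hy, rfl⟩
      simp only [ES, SetLike.mem_coe, Submodule.mem_iInf, LinearMap.mem_ker] at hy ⊢
      intro f
      exact hy (f ∘ₗ X.mkQ)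
    · intro z hz
      obtain ⟨y, rfl⟩ := X.mkQ_surjective z
      have hart : IsArtinian A Y := isArtinian_of_tower k inferInstance
      obtain ⟨t, ht⟩ := Finset.exists_inf_le (fun f : Y →ₗ[A] S => LinearMap.ker f)
      let g : Y →ₗ[A] (t → S) := LinearMap.pi fun f => f.1
      have hker : ∀ v, g v = 0 → v ∈ ES A S Y := by
        intro v hv
        rw [ES, Submodule.mem_iInf]
        intro f
        apply ht f
        rw [Submodule.mem_finsetInf]
        intro i hi
        exact congrFun hv ⟨i, hi⟩
      obtain ⟨C, hC⟩ := exists_isCompl (X.map g)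
      let p : (t → S) →ₗ[A] (t → S) := C.subtype ∘ₗ C.projectionOnto (X.map g) hC.symm
      have hp : ∀ v, p v = 0 ↔ v ∈ X.map g := by
        intro v
        simp [p]
      have hpy : p (g y) = 0 := by
        funext i
        rw [ES, Submodule.mem_iInf] at hz
        have hX : X ≤ LinearMap.ker (LinearMap.proj i ∘ₗ p ∘ₗ g : Y →ₗ[A] S) := by
          intro x hx
          have : p (g x) = 0 := (hp _).2 ⟨x, hx, rfl⟩
          simp [this]
        exact hz (X.liftQ _ hX)
      obtain ⟨x, hx, hxy⟩ := (hp _).1 hpy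
      refine ⟨y - x, hker _ (by rw [map_sub, hxy, sub_self]), ?_⟩
      rw [map_sub, sub_eq_self]
      simpa using hx
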